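/- arXiv:2005.00797 — 2 statements merged into one kernel-verified Lean document; each statement's English description precedes it below -/
import Mathlib

section
/- (Lemma 4, location of the Perron root) Let q ≥ 1 and 0 < ρ ≤ 1/(2(21q + 6q² + 1)(3 + 2q)), and let A be the 3×3 real matrix with rows (2ρ, ρ, 2ρq), (1, 0, q), (7+2q, ρ, ρ(1+2ρq)). Then the characteristic polynomial p(ζ) := det(ζI₃ − A) satisfies p(√ρ) < 0; consequently A has a real eigenvalue λ with √ρ < λ ≤ 1/2. -/
open scoped BigOperators

/-!
Write `c = ρ(1 + 2ρq)` and `b = 7 + 2q`. Expanding the determinant along the first row,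
`p(x) = (x - 2ρ)(x(x - c) - qρ) - ρ(x - c) - ρqb - 2ρq(ρ + xb)`.
At `x = √ρ` the first product equals `(√ρ - 2ρ)((1 - q)ρ - c√ρ) ≤ 0`, and the remaining terms are
negative since `c < qb`. The bound on `ρ` gives `ρ(6 + 130q + 144q²) ≤ 1`, which makes the terms
of `p(1/2)` other than `1/8` small, so `p(1/2) > 0`. The intermediate value theorem on
`[√ρ, 1/2]` then produces the root.
-/

/-- The expanded characteristic polynomial of the matrix, as a function. -/
lemma eval_charpoly_expand (q ρ x : ℝ) :
    (Matrix.charpoly !![2 * ρ, ρ, 2 * ρ * q;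
                 1, 0, q;
                 7 + 2 * q, ρ, ρ * (1 + 2 * ρ * q)]).eval x =
      (x - 2 * ρ) * (x * (x - ρ * (1 + 2 * ρ * q)) - q * ρ)
        - ρ * (x - ρ * (1 + 2 * ρ * q)) - ρ * (q * (7 + 2 * q))
        - 2 * ρ * q * (ρ + x * (7 + 2 * q)) := by
  rw [Matrix.eval_charpoly, Matrix.det_fin_three]
  simp
  ring

/-- The hypothesis on `ρ`, cleared of denominators and weakened using `q ^ 2 ≤ q ^ 3`. -/
lemma rho_quadratic_bound (q ρ : ℝ) (hq : 1 ≤ q) (hρ0 : 0 < ρ)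
    (hρ : ρ ≤ 1 / (2 * (21 * q + 6 * q ^ 2 + 1) * (3 + 2 * q))) :
    6 * ρ + 130 * (ρ * q) + 144 * (ρ * q ^ 2) ≤ 1 := by
  rw [le_div_iff₀ (by positivity)] at hρ
  have h : 0 ≤ ρ * q ^ 2 * (q - 1) := mul_nonneg (by positivity) (by linarith)
  nlinarith

/-- Lemma 4, location of the Perron root: the characteristic polynomial
of `A` is negative at `√ρ`, hence `A` has a real eigenvalue in `(√ρ, 1/2]`. -/
theorem statement_15 (q ρ : ℝ) (hq : 1 ≤ q) (hρ0 : 0 < ρ)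
    (hρ : ρ ≤ 1 / (2 * (21 * q + 6 * q ^ 2 + 1) * (3 + 2 * q)))
    (A : Matrix (Fin 3) (Fin 3) ℝ)
    (hA : A = !![2 * ρ, ρ, 2 * ρ * q;
                 1, 0, q;
                 7 + 2 * q, ρ, ρ * (1 + 2 * ρ * q)]) :
    (A.charpoly).eval (Real.sqrt ρ) < 0 ∧
      ∃ lam : ℝ, Real.sqrt ρ < lam ∧ lam ≤ 1 / 2 ∧ (A.charpoly).IsRoot lam := by
  have hb := rho_quadratic_bound q ρ hq hρ0 hρ
  have hρq : ρ ≤ ρ * q := le_mul_of_one_le_right hρ0.le hq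
  have hρq2 : ρ * q ≤ ρ * q ^ 2 := by nlinarith
  obtain ⟨c, hc⟩ : ∃ c, c = ρ * (1 + 2 * ρ * q) := ⟨_, rfl⟩
  have hc0 : 0 < c := by rw [hc]; positivity
  have hc2 : c ≤ 2 * ρ := by rw [hc]; nlinarith
  have hs0 : 0 < Real.sqrt ρ := Real.sqrt_pos.2 hρ0
  have hss : Real.sqrt ρ * Real.sqrt ρ = ρ := Real.mul_self_sqrt hρ0.le
  have hs1 : Real.sqrt ρ < 1 / 2 := by
    rw [Real.sqrt_lt' (by norm_num)]; linarith
  have hneg : (A.charpoly).eval (Real.sqrt ρ) < 0 := by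
    rw [hA, eval_charpoly_expand, ← hc]
    have h1 : 0 ≤ Real.sqrt ρ - 2 * ρ := by nlinarith
    have h2 : Real.sqrt ρ * (Real.sqrt ρ - c) - q * ρ ≤ 0 := by nlinarith
    have h3 := mul_nonpos_of_nonneg_of_nonpos h1 h2
    have h4 : 0 < ρ * (Real.sqrt ρ - c + q * (7 + 2 * q)) :=
      mul_pos hρ0 (by nlinarith)
    have h5 : 0 < 2 * ρ * q * (ρ + Real.sqrt ρ * (7 + 2 * q)) := by positivity
    linarith
  have hpos : 0 < (A.charpoly).eval (1 / 2) := by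
    rw [hA, eval_charpoly_expand, ← hc]
    have h1 : 0 ≤ ρ * c := by positivity
    have h2 : 0 ≤ ρ * (q * ρ) := by positivity
    have h3 : ρ * (ρ * q) ≤ ρ := by nlinarith
    nlinarith
  refine ⟨hneg, ?_⟩
  obtain ⟨x, hx, hx0⟩ := intermediate_value_Ioo hs1.le
    (A.charpoly.continuous.continuousOn) (Set.mem_Ioo.2 ⟨hneg, hpos⟩)
  exact ⟨x, hx.1, hx.2.le, hx0⟩
end

section
/- (Lemma 4, eigenvector bounds) Let q ≥ 1 and ρ > 0, let A be the 3×3 real matrix with rows (2ρ, ρ, 2ρq), (1, 0, q), (7+2q, ρ, ρ(1+2ρq)), and suppose v ∈ ℝ³ has strictly positive entries and satisfies Av = λ₁ v for some real λ₁ with √ρ < λ₁ ≤ 1/2. Then v(1) ≤ v(3)/(2(7+2q)) and v(2) ≤ (1/(2√ρ(7+2q)) + q/√ρ) · v(3). -/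
/-! The bound on `v 0` is the third row of `A v = lam1 v` with its nonnegative `ρ`-terms dropped and
`lam1 ≤ 1 / 2`; the bound on `v 1` is the second row, `v 0 + q * v 2 = lam1 * v 1`, combined with
`√ρ < lam1` and the bound on `v 0`. -/

open scoped BigOperators

/-- Lemma 4, eigenvector bounds: bounds on the entries of a positive
eigenvector of `A` associated with an eigenvalue `λ₁ ∈ (√ρ, 1/2]`. -/
theorem statement_16 (q ρ : ℝ) (hq : 1 ≤ q) (hρ0 : 0 < ρ)
    (A : Matrix (Fin 3) (Fin 3) ℝ)
    (hA : A = !![2 * ρ, ρ, 2 * ρ * q;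
                 1, 0, q;
                 7 + 2 * q, ρ, ρ * (1 + 2 * ρ * q)])
    (v : Fin 3 → ℝ) (hv : ∀ i, 0 < v i)
    (lam1 : ℝ) (heig : A.mulVec v = lam1 • v)
    (hlow : Real.sqrt ρ < lam1) (hup : lam1 ≤ 1 / 2) :
    v 0 ≤ v 2 / (2 * (7 + 2 * q)) ∧
      v 1 ≤ (1 / (2 * Real.sqrt ρ * (7 + 2 * q)) + q / Real.sqrt ρ) * v 2 := by
  have h0 := hv 0
  have h1 := hv 1
  have h2 := hv 2
  have hs : 0 < Real.sqrt ρ := Real.sqrt_pos.mpr hρ0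
  have hc : 0 < 7 + 2 * q := by linarith
  have row2 : v 0 + q * v 2 = lam1 * v 1 := by
    have h := congrFun heig 1
    simpa [hA, Matrix.mulVec, dotProduct, Fin.sum_univ_three] using h
  have row3 : (7 + 2 * q) * v 0 + ρ * v 1 + ρ * (1 + 2 * ρ * q) * v 2 = lam1 * v 2 := by
    have h := congrFun heig 2
    simpa [hA, Matrix.mulVec, dotProduct, Fin.sum_univ_three] using h
  -- In the third row, drop the two nonnegative `ρ`-terms and use `lam1 ≤ 1 / 2`.
  have hfirst : v 0 ≤ v 2 / (2 * (7 + 2 * q)) := by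
    rw [le_div_iff₀ (by positivity)]
    have p1 : 0 ≤ ρ * v 1 := by positivity
    have p2 : 0 ≤ ρ * (1 + 2 * ρ * q) * v 2 := by positivity
    have p3 : lam1 * v 2 ≤ 1 / 2 * v 2 := by gcongr
    linarith
  refine ⟨hfirst, ?_⟩
  -- In the second row, use `√ρ < lam1` and insert the bound on `v 0`.
  have hmul : v 1 * Real.sqrt ρ ≤ v 2 / (2 * (7 + 2 * q)) + q * v 2 := by
    have p : Real.sqrt ρ * v 1 ≤ lam1 * v 1 := by gcongr
    linarith
  calc v 1 ≤ (v 2 / (2 * (7 + 2 * q)) + q * v 2) / Real.sqrt ρ := (le_div_iff₀ hs).mpr hmul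
    _ = (1 / (2 * Real.sqrt ρ * (7 + 2 * q)) + q / Real.sqrt ρ) * v 2 := by
      field_simp
end
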